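/- Let n ≥ 1 be an integer, δ ∈ (0, n] and p ∈ (1, ∞). There exists a constant c > 0, depending only on n, δ and p, such that for every f ∈ BMO(ℝⁿ, ℋ^δ_∞) with ‖f‖_{BMO(ℝⁿ,ℋ^δ_∞)} ≠ 0, the function x ↦ exp(c f(x)/‖f‖_{BMO(ℝⁿ,ℋ^δ_∞)}) belongs to A_{p,δ}. -/

import Mathlib

open scoped ENNReal
open Set MeasureTheory

noncomputable section

/-- An axis-parallel cube in `ℝⁿ`, described by its lower corner and positive side length. -/
structure Cube (n : ℕ) where
  corner : Fin n → ℝ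
  side : ℝ
  side_pos : 0 < side

namespace Cube

/-- The half-open cube `∏ᵢ [cornerᵢ, cornerᵢ + side)` as a set of points. -/
def toSet {n : ℕ} (Q : Cube n) : Set (Fin n → ℝ) :=
  {x | ∀ i, Q.corner i ≤ x i ∧ x i < Q.corner i + Q.side}

/-- A cube is dyadic if it has the form `2^k·(z + [0,1)ⁿ)` with `k ∈ ℤ`, `z ∈ ℤⁿ`. -/
def IsDyadic {n : ℕ} (Q : Cube n) : Prop :=
  ∃ (k : ℤ) (z : Fin n → ℤ), Q.side = (2:ℝ) ^ k ∧ ∀ i, Q.corner i = (z i : ℝ) * (2:ℝ) ^ k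

/-- `Q'` is a dyadic subcube of `Q`, i.e. obtained from `Q` by repeated bisection. -/
def IsDyadicSubcube {n : ℕ} (Q' Q : Cube n) : Prop :=
  ∃ (k : ℕ) (z : Fin n → ℕ), (∀ i, z i < 2 ^ k) ∧
    Q'.side = Q.side / 2 ^ k ∧ ∀ i, Q'.corner i = Q.corner i + (z i : ℝ) * (Q.side / 2 ^ k)

/-- The concentric dilate `t·Q` of a cube. -/
def dilate {n : ℕ} (Q : Cube n) (t : ℝ) (ht : 0 < t) : Cube n :=
  ⟨fun i => Q.corner i + Q.side / 2 - t * Q.side / 2, t * Q.side, mul_pos ht Q.side_pos⟩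

end Cube

/-- The Hausdorff content `ℋ^δ_∞`. -/
def hContent (n : ℕ) (δ : ℝ) (E : Set (Fin n → ℝ)) : ℝ≥0∞ :=
  ⨅ (Qs : ℕ → Cube n) (_ : E ⊆ ⋃ i, (Qs i).toSet), ∑' i, ENNReal.ofReal ((Qs i).side ^ δ)

/-- The dyadic Hausdorff content `~ℋ^δ_∞`. -/
def dContent (n : ℕ) (δ : ℝ) (E : Set (Fin n → ℝ)) : ℝ≥0∞ :=
  ⨅ (Qs : ℕ → Cube n) (_ : (∀ i, (Qs i).IsDyadic) ∧ E ⊆ ⋃ i, (Qs i).toSet),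
    ∑' i, ENNReal.ofReal ((Qs i).side ^ δ)

/-- The Choquet integral `∫_E f dℋ^δ_∞`. -/
def integH (n : ℕ) (δ : ℝ) (f : (Fin n → ℝ) → ℝ) (E : Set (Fin n → ℝ)) : ℝ≥0∞ :=
  ∫⁻ t in Ioi (0:ℝ), hContent n δ {x | x ∈ E ∧ t < f x}

/-- The Choquet integral `∫_E f d~ℋ^δ_∞` w.r.t. the dyadic Hausdorff content. -/
def integD (n : ℕ) (δ : ℝ) (f : (Fin n → ℝ) → ℝ) (E : Set (Fin n → ℝ)) : ℝ≥0∞ :=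
  ∫⁻ t in Ioi (0:ℝ), dContent n δ {x | x ∈ E ∧ t < f x}

/-- A property holds `ℋ^δ_∞`-a.e. -/
def AEContent (n : ℕ) (δ : ℝ) (P : (Fin n → ℝ) → Prop) : Prop :=
  hContent n δ {x | ¬ P x} = 0

/-- `ℋ^δ_∞`-quasicontinuity. -/
def QuasiCont (n : ℕ) (δ : ℝ) (f : (Fin n → ℝ) → ℝ) : Prop :=
  ∀ ε : ℝ, 0 < ε → ∃ O : Set (Fin n → ℝ),
    IsOpen O ∧ hContent n δ O < ENNReal.ofReal ε ∧ ContinuousOn f Oᶜ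

/-- `L¹_loc(ℝⁿ, ℋ^δ_∞)`. -/
def MemL1loc (n : ℕ) (δ : ℝ) (f : (Fin n → ℝ) → ℝ) : Prop :=
  QuasiCont n δ f ∧ ∀ K : Set (Fin n → ℝ), IsCompact K → integH n δ (fun x => |f x|) K < ⊤

/-- `L^∞(ℝⁿ, ℋ^δ_∞)`. -/
def MemLinf (n : ℕ) (δ : ℝ) (f : (Fin n → ℝ) → ℝ) : Prop :=
  QuasiCont n δ f ∧ ∃ M : ℝ, AEContent n δ (fun x => |f x| ≤ M)

/-- The `BMO(ℝⁿ, ℋ^δ_∞)` seminorm. -/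
def bmoNorm (n : ℕ) (δ : ℝ) (f : (Fin n → ℝ) → ℝ) : ℝ≥0∞ :=
  ⨆ Q : Cube n, ⨅ c : ℝ,
    integH n δ (fun x => |f x - c|) Q.toSet / hContent n δ Q.toSet

/-- Membership in `BMO(ℝⁿ, ℋ^δ_∞)`. -/
def MemBMO (n : ℕ) (δ : ℝ) (f : (Fin n → ℝ) → ℝ) : Prop :=
  MemL1loc n δ f ∧ bmoNorm n δ f < ⊤

/-- `essinf_{x ∈ Q} f := inf {t ∈ (0,∞) : ℋ^δ_∞({x ∈ Q : f x < t}) > 0}`. -/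
def essInfQ (n : ℕ) (δ : ℝ) (f : (Fin n → ℝ) → ℝ) (Q : Cube n) : ℝ :=
  sInf {t : ℝ | 0 < t ∧ 0 < hContent n δ {x | x ∈ Q.toSet ∧ f x < t}}

/-- The `BLO(ℝⁿ, ℋ^δ_∞)` seminorm. -/
def bloNorm (n : ℕ) (δ : ℝ) (f : (Fin n → ℝ) → ℝ) : ℝ≥0∞ :=
  ⨆ Q : Cube n,
    integH n δ (fun x => |f x - essInfQ n δ f Q|) Q.toSet / hContent n δ Q.toSet

/-- Membership in `BLO(ℝⁿ, ℋ^δ_∞)`. -/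
def MemBLO (n : ℕ) (δ : ℝ) (f : (Fin n → ℝ) → ℝ) : Prop :=
  MemL1loc n δ f ∧ bloNorm n δ f < ⊤

/-- A weight: locally Choquet-integrable, quasicontinuous, positive `ℋ^δ_∞`-a.e. -/
def IsWeight (n : ℕ) (δ : ℝ) (w : (Fin n → ℝ) → ℝ) : Prop :=
  MemL1loc n δ w ∧ AEContent n δ (fun x => 0 < w x)

/-- The capacitary Muckenhoupt `A_{p,δ}` constant, for `p > 1`. -/
def apConst (n : ℕ) (δ p : ℝ) (w : (Fin n → ℝ) → ℝ) : ℝ≥0∞ :=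
  ⨆ Q : Cube n,
    (integH n δ w Q.toSet / hContent n δ Q.toSet) *
      (integH n δ (fun x => w x ^ (-(1 / (p - 1)))) Q.toSet / hContent n δ Q.toSet) ^ (p - 1)

/-- Membership in `A_{p,δ}`, `p > 1`. -/
def MemAp (n : ℕ) (δ p : ℝ) (w : (Fin n → ℝ) → ℝ) : Prop :=
  IsWeight n δ w ∧ apConst n δ p w < ⊤

/-- The Hardy–Littlewood maximal operator w.r.t. `ℋ^δ_∞`. -/
def maxOp (n : ℕ) (δ : ℝ) (g : (Fin n → ℝ) → ℝ) (x : Fin n → ℝ) : ℝ≥0∞ :=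
  ⨆ (Q : Cube n) (_ : x ∈ Q.toSet),
    integH n δ (fun y => |g y|) Q.toSet / hContent n δ Q.toSet

/-- The capacitary `A_{1,δ}` constant. -/
def a1Const (n : ℕ) (δ : ℝ) (w : (Fin n → ℝ) → ℝ) : ℝ≥0∞ :=
  sInf {c : ℝ≥0∞ | 0 < c ∧
    AEContent n δ (fun x => maxOp n δ w x ≤ c * ENNReal.ofReal (w x))}

/-- Membership in `A_{1,δ}`. -/
def MemA1 (n : ℕ) (δ : ℝ) (w : (Fin n → ℝ) → ℝ) : Prop :=
  IsWeight n δ w ∧ a1Const n δ w < ⊤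

/-- The `A_{p,δ}` constant for `p ∈ [1,∞)` (it is the `A_{1,δ}` constant when `p = 1`). -/
def apConstGen (n : ℕ) (δ p : ℝ) (w : (Fin n → ℝ) → ℝ) : ℝ≥0∞ :=
  if p = 1 then a1Const n δ w else apConst n δ p w

/-- Membership in `A_{p,δ}` for `p ∈ [1,∞)` (meaning `A_{1,δ}` when `p = 1`). -/
def MemApGen (n : ℕ) (δ p : ℝ) (w : (Fin n → ℝ) → ℝ) : Prop :=
  IsWeight n δ w ∧ apConstGen n δ p w < ⊤

/-- The weighted `BMO^q_w(ℝⁿ, ℋ^δ_∞)` seminorm. -/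
def bmoWNorm (n : ℕ) (δ q : ℝ) (w f : (Fin n → ℝ) → ℝ) : ℝ≥0∞ :=
  ⨆ Q : Cube n, ⨅ c : ℝ,
    (integH n δ (fun x => |f x - c| ^ q * w x) Q.toSet / integH n δ w Q.toSet) ^ (1 / q)

/-- Membership in `BMO^q_w(ℝⁿ, ℋ^δ_∞)`. -/
def MemBMOw (n : ℕ) (δ q : ℝ) (w f : (Fin n → ℝ) → ℝ) : Prop :=
  QuasiCont n δ f ∧
    (∀ K : Set (Fin n → ℝ), IsCompact K → integH n δ (fun x => |f x| ^ q * w x) K < ⊤) ∧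
    bmoWNorm n δ q w f < ⊤

/-- The integral average `f_{Q,δ}` with respect to the dyadic Hausdorff content. -/
def avgQ (n : ℕ) (δ : ℝ) (f : (Fin n → ℝ) → ℝ) (Q : Cube n) : ℝ :=
  ((integD n δ f (Q.toSet ∩ {x | 0 ≤ f x})).toReal -
      (integD n δ (fun x => -f x) (Q.toSet ∩ {x | f x < 0})).toReal) /
    ((dContent n δ (Q.toSet ∩ {x | 0 ≤ f x})).toReal +
      (dContent n δ (Q.toSet ∩ {x | f x < 0})).toReal)

/-! ## Basic properties of the content -/

/-- The gauge `s ↦ s^δ`. -/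
def gV (δ s : ℝ) : ℝ≥0∞ := ENNReal.ofReal (s ^ δ)

lemma exists_small_cubes (n : ℕ) {δ : ℝ} (hδ : 0 < δ) {ε : ℝ≥0∞} (hε : ε ≠ 0) :
    ∃ Q : ℕ → Cube n, ∑' i, gV δ (Q i).side < ε := by
  obtain ⟨e, he, hsum⟩ := ENNReal.exists_pos_sum_of_countable hε ℕ
  refine ⟨fun i => ⟨fun _ => 0, (e i : ℝ) ^ (1 / δ), Real.rpow_pos_of_pos (by exact_mod_cast he i) _⟩, ?_⟩
  convert hsum using 3 with i
  simp only [gV]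
  rw [← Real.rpow_mul (by positivity), one_div_mul_cancel hδ.ne', Real.rpow_one]
  simp

lemma hContent_le_tsum {n : ℕ} {δ : ℝ} (hδ : 0 < δ) {ι : Type*} [Countable ι]
    (Q : ι → Cube n) {E : Set (Fin n → ℝ)} (hE : E ⊆ ⋃ i, (Q i).toSet) :
    hContent n δ E ≤ ∑' i, gV δ (Q i).side := by
  refine ENNReal.le_of_forall_pos_le_add fun ε hε _ => ?_
  obtain ⟨R, hR⟩ := exists_small_cubes n hδ (ε := (ε : ℝ≥0∞)) (by exact_mod_cast hε.ne')
  have : Nonempty (Denumerable (ι ⊕ ℕ)) := nonempty_denumerable _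
  obtain ⟨hd⟩ := this
  let e := (Denumerable.eqv (ι ⊕ ℕ)).symm
  let F : ι ⊕ ℕ → Cube n := Sum.elim Q R
  have h1 : hContent n δ E ≤ ∑' i, gV δ (F (e i)).side := by
    refine iInf₂_le (fun i => F (e i)) ?_
    intro x hx
    obtain ⟨i, hi⟩ := mem_iUnion.1 (hE hx)
    refine mem_iUnion.2 ⟨e.symm (Sum.inl i), ?_⟩
    simpa [F] using hi
  refine h1.trans ?_
  rw [e.tsum_eq (fun i => gV δ (F i).side)]
  rw [Summable.tsum_sum ENNReal.summable ENNReal.summable]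
  simp only [F, Sum.elim_inl, Sum.elim_inr]
  gcongr

lemma hContent_mono {n : ℕ} {δ : ℝ} {E F : Set (Fin n → ℝ)} (h : E ⊆ F) :
    hContent n δ E ≤ hContent n δ F :=
  le_iInf₂ fun Q hQ => iInf₂_le Q (h.trans hQ)

lemma hContent_empty (n : ℕ) {δ : ℝ} (hδ : 0 < δ) : hContent n δ ∅ = 0 := by
  have := hContent_le_tsum (n := n) hδ (ι := Empty) (fun i => i.elim) (E := ∅) (empty_subset _)
  simpa using this

lemma exists_cover {n : ℕ} {δ : ℝ} {E : Set (Fin n → ℝ)} {a : ℝ≥0∞} (h : hContent n δ E < a) :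
    ∃ Q : ℕ → Cube n, E ⊆ (⋃ i, (Q i).toSet) ∧ ∑' i, gV δ (Q i).side < a := by
  simpa only [hContent, iInf_lt_iff, exists_prop, gV] using h

lemma hContent_iUnion_le {n : ℕ} {δ : ℝ} (hδ : 0 < δ) {ι : Type*} [Countable ι]
    (E : ι → Set (Fin n → ℝ)) : hContent n δ (⋃ i, E i) ≤ ∑' i, hContent n δ (E i) := by
  refine ENNReal.le_of_forall_pos_le_add fun ε hε hfin => ?_
  obtain ⟨e, he, hsum⟩ := ENNReal.exists_pos_sum_of_countable
    (ε := (ε : ℝ≥0∞)) (by exact_mod_cast hε.ne') ι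
  have : ∀ i, ∃ Q : ℕ → Cube n, E i ⊆ (⋃ j, (Q j).toSet) ∧
      ∑' j, gV δ (Q j).side < hContent n δ (E i) + e i := fun i =>
    exists_cover (ENNReal.lt_add_right (ENNReal.ne_top_of_tsum_ne_top hfin.ne i)
      (by exact_mod_cast (he i).ne'))
  choose Q hQ hQs using this
  have h1 := hContent_le_tsum hδ (fun q : ι × ℕ => Q q.1 q.2) (E := ⋃ i, E i) (by
    refine iUnion_subset fun i x hx => ?_
    obtain ⟨j, hj⟩ := mem_iUnion.1 (hQ i hx)
    exact mem_iUnion.2 ⟨(i, j), hj⟩)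
  refine h1.trans ?_
  rw [ENNReal.tsum_prod (f := fun i j => gV δ (Q i j).side)]
  calc _ ≤ ∑' i, (hContent n δ (E i) + e i) := ENNReal.tsum_le_tsum fun i => (hQs i).le
    _ = ∑' i, hContent n δ (E i) + ∑' i, (e i : ℝ≥0∞) := ENNReal.tsum_add
    _ ≤ _ := by gcongr

lemma hContent_union_le {n : ℕ} {δ : ℝ} (hδ : 0 < δ)
    (E F : Set (Fin n → ℝ)) : hContent n δ (E ∪ F) ≤ hContent n δ E + hContent n δ F := by
  have := hContent_iUnion_le hδ (fun b : Bool => cond b E F)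
  rw [← union_eq_iUnion] at this
  simpa [tsum_bool, add_comm] using this

lemma cube_volume {n : ℕ} (Q : Cube n) : volume Q.toSet = ENNReal.ofReal Q.side ^ n := by
  have : Q.toSet = Set.pi univ fun i => Ico (Q.corner i) (Q.corner i + Q.side) := by
    ext x; simp [Cube.toSet]
  rw [this, Real.volume_pi_Ico]
  simp

lemma hContent_cube {n : ℕ} {δ : ℝ} (hδ : 0 < δ) (hδn : δ ≤ n) (Q : Cube n) :
    hContent n δ Q.toSet = gV δ Q.side := by
  apply le_antisymm
  · have := hContent_le_tsum hδ (fun _ : Unit => Q) (E := Q.toSet)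
      (fun x hx => mem_iUnion.2 ⟨(), hx⟩)
    simpa using this
  refine le_iInf₂ fun R hR => ?_
  change _ ≤ ∑' i, gV δ (R i).side
  by_cases hbig : ∃ i, Q.side ≤ (R i).side
  · obtain ⟨i, hi⟩ := hbig
    refine le_trans ?_ (ENNReal.le_tsum i)
    exact ENNReal.ofReal_le_ofReal (Real.rpow_le_rpow Q.side_pos.le hi hδ.le)
  push Not at hbig
  have hv : ENNReal.ofReal Q.side ^ n ≤ ∑' i, ENNReal.ofReal (R i).side ^ n := by
    rw [← cube_volume]
    refine (measure_mono hR).trans ((measure_iUnion_le _).trans ?_)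
    exact ENNReal.tsum_le_tsum fun i => (cube_volume _).le
  -- multiply by side^(δ-n)
  have hQ := Q.side_pos
  have key : ∀ i, ENNReal.ofReal (Q.side ^ (δ - n)) * ENNReal.ofReal (R i).side ^ n
      ≤ gV δ (R i).side := by
    intro i
    have hRi := (R i).side_pos
    rw [← ENNReal.ofReal_pow hRi.le, ← ENNReal.ofReal_mul (by positivity)]
    apply ENNReal.ofReal_le_ofReal
    calc Q.side ^ (δ - n) * (R i).side ^ n ≤ (R i).side ^ (δ - n) * (R i).side ^ n := by
          gcongr ?_ * _
          exact Real.rpow_le_rpow_of_nonpos hRi (hbig i).le (by linarith)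
      _ = (R i).side ^ δ := by
          rw [← Real.rpow_natCast, ← Real.rpow_add hRi]; simp
  calc gV δ Q.side = ENNReal.ofReal (Q.side ^ (δ - n)) * ENNReal.ofReal Q.side ^ n := by
        rw [← ENNReal.ofReal_pow hQ.le, ← ENNReal.ofReal_mul (by positivity), gV,
          ← Real.rpow_natCast, ← Real.rpow_add hQ]; simp
    _ ≤ ENNReal.ofReal (Q.side ^ (δ - n)) * ∑' i, ENNReal.ofReal (R i).side ^ n := by gcongr
    _ = ∑' i, ENNReal.ofReal (Q.side ^ (δ - n)) * ENNReal.ofReal (R i).side ^ n :=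
        ENNReal.tsum_mul_left.symm
    _ ≤ _ := ENNReal.tsum_le_tsum key

lemma gV_pos {δ s : ℝ} (hs : 0 < s) : 0 < gV δ s :=
  ENNReal.ofReal_pos.2 (Real.rpow_pos_of_pos hs _)

lemma gV_ne_top {δ s : ℝ} : gV δ s ≠ ⊤ := ENNReal.ofReal_ne_top

lemma gV_mono {δ s t : ℝ} (hδ : 0 < δ) (hs : 0 ≤ s) (h : s ≤ t) : gV δ s ≤ gV δ t :=
  ENNReal.ofReal_le_ofReal (Real.rpow_le_rpow hs h hδ.le)

lemma gV_two_mul {δ s : ℝ} (hs : 0 ≤ s) : gV δ (2 * s) = gV δ 2 * gV δ s := by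
  rw [gV, Real.mul_rpow (by norm_num) hs, ENNReal.ofReal_mul (by positivity)]; rfl

/-! ## Dyadic grids -/

/-- Side length of level `k` cells of the grid of `Q`. -/
def cSide {n : ℕ} (Q : Cube n) (k : ℕ) : ℝ := Q.side / 2 ^ k

lemma cSide_pos {n : ℕ} (Q : Cube n) (k : ℕ) : 0 < cSide Q k :=
  div_pos Q.side_pos (by positivity)

lemma cSide_succ {n : ℕ} (Q : Cube n) (k : ℕ) : cSide Q k = 2 * cSide Q (k + 1) := by
  unfold cSide; rw [pow_succ]; field_simp

/-- Index of the level `k` cell containing `x`. -/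
def cell {n : ℕ} (Q : Cube n) (k : ℕ) (x : Fin n → ℝ) : Fin n → ℤ :=
  fun i => ⌊(x i - Q.corner i) / cSide Q k⌋

/-- The level `k` cell containing `x`. -/
def dcube {n : ℕ} (Q : Cube n) (k : ℕ) (x : Fin n → ℝ) : Cube n :=
  ⟨fun i => Q.corner i + cell Q k x i * cSide Q k, cSide Q k, cSide_pos Q k⟩

lemma mem_dcube {n : ℕ} (Q : Cube n) (k : ℕ) (x y : Fin n → ℝ) :
    y ∈ (dcube Q k x).toSet ↔ cell Q k y = cell Q k x := by
  have h := cSide_pos Q k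
  rw [funext_iff]
  refine forall_congr' fun i => ?_
  simp only [dcube]
  conv_rhs => lhs; unfold cell
  rw [Int.floor_eq_iff, le_div_iff₀ h, div_lt_iff₀ h]
  constructor <;> rintro ⟨h1, h2⟩ <;> constructor <;> linarith

lemma cell_succ {n : ℕ} {Q : Cube n} {k : ℕ} {x y : Fin n → ℝ}
    (h : cell Q (k + 1) x = cell Q (k + 1) y) : cell Q k x = cell Q k y := by
  have key : ∀ z : Fin n → ℝ, ∀ i, cell Q k z i = cell Q (k + 1) z i / 2 := by
    intro z i
    have h := cSide_pos Q (k + 1)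
    simp only [cell, cSide_succ Q k]
    set u := (z i - Q.corner i) / cSide Q (k + 1) with hu
    have : (z i - Q.corner i) / (2 * cSide Q (k + 1)) = u / 2 := by
      rw [hu]; field_simp
    rw [this, Int.floor_eq_iff]
    have h1 := Int.floor_le u
    have h2 := Int.lt_floor_add_one u
    have h3 : 2 * (⌊u⌋ / 2) ≤ ⌊u⌋ := by lia
    have h4 : ⌊u⌋ + 1 ≤ 2 * (⌊u⌋ / 2) + 2 := by lia
    have h3' : 2 * ((⌊u⌋ / 2 : ℤ) : ℝ) ≤ ⌊u⌋ := by exact_mod_cast h3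
    have h4' : (⌊u⌋ : ℝ) + 1 ≤ 2 * ((⌊u⌋ / 2 : ℤ) : ℝ) + 2 := by exact_mod_cast h4
    constructor <;> linarith
  ext i
  rw [key, key, h]

lemma cell_le {n : ℕ} {Q : Cube n} {j k : ℕ} (hjk : j ≤ k) {x y : Fin n → ℝ}
    (h : cell Q k x = cell Q k y) : cell Q j x = cell Q j y := by
  induction k, hjk using Nat.le_induction with
  | base => exact h
  | succ k _ ih => exact ih (cell_succ h)

lemma mem_iff_cell_zero {n : ℕ} {Q : Cube n} {x y : Fin n → ℝ} (hx : x ∈ Q.toSet) :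
    y ∈ Q.toSet ↔ cell Q 0 y = cell Q 0 x := by
  have h0 : ∀ z, z ∈ Q.toSet ↔ cell Q 0 z = 0 := by
    intro z
    rw [funext_iff]
    refine forall_congr' fun i => ?_
    have h := Q.side_pos
    simp only [cell, cSide, pow_zero, div_one, Pi.zero_apply, Int.floor_eq_iff, le_div_iff₀ h,
      div_lt_iff₀ h]
    constructor <;> rintro ⟨h1, h2⟩ <;> constructor <;> push_cast at * <;> linarith
  rw [h0, (h0 x).1 hx]

lemma dcube_subset {n : ℕ} {Q : Cube n} {x : Fin n → ℝ} (hx : x ∈ Q.toSet) (k : ℕ) :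
    (dcube Q k x).toSet ⊆ Q.toSet := by
  intro y hy
  rw [mem_dcube] at hy
  exact (mem_iff_cell_zero hx).2 (cell_le (Nat.zero_le k) hy)

lemma cover_by_cells {n : ℕ} {δ : ℝ} (hδ : 0 < δ) (Q R : Cube n) :
    ∃ (k : ℕ) (y : (Fin n → Bool) → (Fin n → ℝ)),
      (∀ x ∈ Q.toSet, x ∈ R.toSet → ∃ e, cell Q k x = cell Q k (y e)) ∧
      gV δ (cSide Q k) ≤ gV δ 2 * gV δ R.side := by
  have hR := R.side_pos
  have hQ := Q.side_pos
  rw [← gV_two_mul hR.le]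
  rcases le_or_gt R.side Q.side with hle | hlt
  · obtain ⟨k, hk1, hk2⟩ := exists_nat_pow_near (x := Q.side / R.side) (y := (2 : ℝ))
      ((one_le_div hR).2 hle) (by norm_num)
    have hs1 : R.side ≤ cSide Q k := by
      unfold cSide
      rw [le_div_iff₀ (by positivity)]
      rw [le_div_iff₀ hR] at hk1
      linarith
    have hs2 : cSide Q k ≤ 2 * R.side := by
      unfold cSide
      rw [div_le_iff₀ (by positivity)]
      rw [div_lt_iff₀ hR, pow_succ] at hk2
      nlinarith
    refine ⟨k, fun e i => R.corner i + if e i then cSide Q k else 0, ?_,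
      gV_mono hδ (cSide_pos _ _).le hs2⟩
    intro x _ hx
    have hc := cSide_pos Q k
    have e1 : ∀ (e : Fin n → Bool) i,
        cell Q k (fun i => R.corner i + if e i then cSide Q k else 0) i =
          cell Q k R.corner i + if e i then 1 else 0 := by
      intro e i
      simp only [cell]
      cases e i
      · simp
      · simp only [if_true]
        rw [show (R.corner i + cSide Q k - Q.corner i) / cSide Q k =
          (R.corner i - Q.corner i) / cSide Q k + 1 by field_simp; ring, Int.floor_add_one]
    refine ⟨fun i => decide (cell Q k x i ≠ cell Q k R.corner i), ?_⟩
    ext i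
    rw [e1]
    obtain ⟨h1, h2⟩ := hx i
    have l1 : cell Q k R.corner i ≤ cell Q k x i :=
      Int.floor_le_floor (by gcongr)
    have l2 : cell Q k x i ≤ cell Q k R.corner i + 1 := by
      simp only [cell]
      rw [← Int.floor_add_one]
      apply Int.floor_le_floor
      rw [show (R.corner i - Q.corner i) / cSide Q k + 1 =
        (R.corner i + cSide Q k - Q.corner i) / cSide Q k by field_simp; ring]
      gcongr
      linarith
    by_cases hi : cell Q k x i = cell Q k R.corner i
    · simp [hi]
    · simp only [ne_eq, hi, not_false_eq_true, decide_true, if_true]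
      lia
  · refine ⟨0, fun _ => Q.corner, ?_, ?_⟩
    · intro x hx _
      refine ⟨fun _ => false, ?_⟩
      refine (mem_iff_cell_zero (Q := Q) ?_).1 hx
      intro i
      constructor <;> linarith
    · refine gV_mono hδ (cSide_pos _ _).le ?_
      simp only [cSide, pow_zero, div_one]
      linarith

lemma tsum_ite_le {ι : Type*} (q : ι → Prop) [DecidablePred q] (v : ℝ≥0∞)
    (h : ∀ s t, q s → q t → s = t) : ∑' s, (if q s then v else 0) ≤ v := by
  by_cases hq : ∃ s, q s
  · obtain ⟨s, hs⟩ := hq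
    rw [tsum_eq_single s]
    · simp [hs]
    · intro t ht
      rw [if_neg]
      intro h'
      exact ht (h _ _ h' hs)
  · push Not at hq
    simp [hq]

/-! ## The stopping time covering -/

/-- Constant in the covering lemma. -/
def cC (n : ℕ) (δ : ℝ) : ℝ≥0∞ := 8 * gV δ 2 * (2 ^ n * gV δ 2)

lemma one_le_gV_two {δ : ℝ} (hδ : 0 < δ) : 1 ≤ gV δ 2 := by
  rw [gV, ENNReal.one_le_ofReal]
  exact Real.one_le_rpow (by norm_num) hδ.le

lemma cC_ne_zero (n : ℕ) (δ : ℝ) : cC n δ ≠ 0 := by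
  have : gV δ 2 ≠ 0 := (gV_pos (by norm_num)).ne'
  simp [cC, this]

lemma cC_ne_top (n : ℕ) (δ : ℝ) : cC n δ ≠ ⊤ := by
  have : gV δ 2 ≠ ⊤ := gV_ne_top
  unfold cC
  refine ENNReal.mul_ne_top (ENNReal.mul_ne_top (by norm_num) this)
    (ENNReal.mul_ne_top (by simp) this)

lemma dyadic_cover {n : ℕ} {δ : ℝ} (hδ : 0 < δ) (Q : Cube n) {E : Set (Fin n → ℝ)}
    (hEQ : E ⊆ Q.toSet) (hE : cC n δ * hContent n δ E < gV δ Q.side) :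
    ∃ (k : ℕ × (Fin n → Bool) → ℕ) (y : ℕ × (Fin n → Bool) → (Fin n → ℝ)),
      (∀ x ∈ E, ∃ i, cell Q (k i) x = cell Q (k i) (y i)) ∧
      8 * gV δ 2 * ∑' i, gV δ (cSide Q (k i)) < gV δ Q.side := by
  have h1 : hContent n δ E < gV δ Q.side / cC n δ := by
    rw [ENNReal.lt_div_iff_mul_lt (Or.inl (cC_ne_zero n δ)) (Or.inl (cC_ne_top n δ)), mul_comm]
    exact hE
  obtain ⟨R, hR, hRs⟩ := exists_cover h1
  rw [ENNReal.lt_div_iff_mul_lt (Or.inl (cC_ne_zero n δ)) (Or.inl (cC_ne_top n δ))] at hRs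
  choose k y hy hk using fun i => cover_by_cells hδ Q (R i)
  refine ⟨fun q => k q.1, fun q => y q.1 q.2, ?_, ?_⟩
  · intro x hx
    obtain ⟨i, hi⟩ := mem_iUnion.1 (hR hx)
    obtain ⟨e, he⟩ := hy i x (hEQ hx) hi
    exact ⟨(i, e), he⟩
  · refine lt_of_le_of_lt ?_ hRs
    rw [ENNReal.tsum_prod (f := fun i (_ : Fin n → Bool) => gV δ (cSide Q (k i))), mul_comm _ (cC n δ), cC,
      mul_assoc (8 * gV δ 2)]
    gcongr
    rw [← ENNReal.tsum_mul_left]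
    refine ENNReal.tsum_le_tsum fun i => ?_
    rw [tsum_fintype]
    simp only [Finset.sum_const, nsmul_eq_mul]
    rw [Finset.card_univ, Fintype.card_fun]
    simp only [Fintype.card_bool, Fintype.card_fin]
    push_cast
    rw [mul_assoc]
    gcongr
    exact hk i

lemma stopping_cover {n : ℕ} {δ : ℝ} (hδ : 0 < δ) (Q : Cube n) {E : Set (Fin n → ℝ)}
    (hEQ : E ⊆ Q.toSet) (hE : cC n δ * hContent n δ E < gV δ Q.side) :
    ∃ (S : Set (ℕ × (Fin n → ℤ))) (P : S → Cube n),
      (E ⊆ ⋃ s, (P s).toSet) ∧ (∀ s, (P s).toSet ⊆ Q.toSet) ∧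
      (∀ s, 4 * hContent n δ (E ∩ (P s).toSet) ≤ gV δ (P s).side) ∧
      2 * ∑' s, gV δ (P s).side ≤ gV δ Q.side := by
  classical
  obtain ⟨k, y, hcov, htot⟩ := dyadic_cover hδ Q hEQ hE
  set v : ℕ × (Fin n → Bool) → ℝ≥0∞ := fun i => gV δ (cSide Q (k i)) with hv
  let μ : ℕ → (Fin n → ℤ) → ℝ≥0∞ := fun j z =>
    ∑' i, if j ≤ k i ∧ cell Q j (y i) = z then v i else 0
  let bad : ℕ → (Fin n → ℝ) → Prop := fun j x => gV δ (cSide Q j) ≤ 4 * μ j (cell Q j x)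
  have bad_congr : ∀ {j x x'}, cell Q j x = cell Q j x' → bad j x → bad j x' := by
    intro j x x' h hb
    simpa only [bad, h] using hb
  have bad_cov : ∀ {i x}, cell Q (k i) x = cell Q (k i) (y i) → bad (k i) x := by
    intro i x h
    have h1 : v i ≤ μ (k i) (cell Q (k i) x) := by
      refine le_trans ?_ (ENNReal.le_tsum i)
      rw [if_pos ⟨le_rfl, h.symm⟩]
    refine h1.trans ?_
    exact le_mul_of_one_le_left (zero_le) (by norm_num)
  have not_bad_zero : ∀ x, ¬ bad 0 x := by
    intro x hb
    refine absurd htot (not_lt.2 ?_)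
    have e0 : cSide Q 0 = Q.side := by simp [cSide]
    simp only [bad, e0] at hb
    refine hb.trans ?_
    have : μ 0 (cell Q 0 x) ≤ ∑' i, v i :=
      ENNReal.tsum_le_tsum fun i => by split_ifs <;> simp
    gcongr
    calc (4 : ℝ≥0∞) ≤ 8 * 1 := by norm_num
      _ ≤ 8 * gV δ 2 := by gcongr; exact one_le_gV_two hδ
  let S : Set (ℕ × (Fin n → ℤ)) := {q | ∃ x ∈ E, cell Q (q.1 + 1) x = q.2 ∧ bad (q.1 + 1) x ∧
    ∀ i ≤ q.1, ¬ bad i x}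
  choose X hXE hXc hXb hXn using fun s : S => s.2
  refine ⟨S, fun s => dcube Q s.1.1 (X s), ?_, ?_, ?_, ?_⟩
  · intro x hx
    have hex : ∃ j, bad j x := by
      obtain ⟨i, hi⟩ := hcov x hx
      exact ⟨_, bad_cov hi⟩
    obtain ⟨j, hj⟩ : ∃ j, Nat.find hex = j + 1 := by
      refine Nat.exists_eq_succ_of_ne_zero fun h0 => not_bad_zero x ?_
      rw [← h0]; exact Nat.find_spec hex
    have hb : bad (j + 1) x := hj ▸ Nat.find_spec hex
    let s : S := ⟨(j, cell Q (j + 1) x), x, hx, rfl, hb, fun i hi =>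
      Nat.find_min hex (by lia)⟩
    refine mem_iUnion.2 ⟨s, ?_⟩
    rw [mem_dcube]
    exact cell_succ (hXc s).symm
  · intro s
    exact dcube_subset (hEQ (hXE s)) _
  · intro s
    have hnb := hXn s s.1.1 le_rfl
    simp only [bad, not_le] at hnb
    refine le_trans ?_ hnb.le
    gcongr
    let I : Set (ℕ × (Fin n → Bool)) :=
      {i | s.1.1 ≤ k i ∧ cell Q s.1.1 (y i) = cell Q s.1.1 (X s)}
    have := hContent_le_tsum hδ (fun i : I => dcube Q (k i) (y i))
      (E := E ∩ (dcube Q s.1.1 (X s)).toSet) (by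
        rintro z ⟨hzE, hz⟩
        rw [mem_dcube] at hz
        obtain ⟨i, hi⟩ := hcov z hzE
        have hki : s.1.1 ≤ k i := by
          by_contra hlt
          push Not at hlt
          exact hXn s _ hlt.le (bad_congr (cell_le hlt.le hz) (bad_cov hi))
        refine mem_iUnion.2 ⟨⟨i, hki, ?_⟩, ?_⟩
        · rw [← hz]; exact (cell_le hki hi).symm
        · rw [mem_dcube]; exact hi)
    refine this.trans ?_
    rw [tsum_subtype I (fun i => gV δ (dcube Q (k i) (y i)).side)]
    refine ENNReal.tsum_le_tsum fun i => ?_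
    simp only [indicator, I, mem_ofPred_eq]
    rfl
  · have h1 : ∀ s : S, gV δ (dcube Q s.1.1 (X s)).side ≤
        gV δ 2 * (4 * μ (s.1.1 + 1) s.1.2) := by
      intro s
      change gV δ (cSide Q s.1.1) ≤ _
      rw [cSide_succ, gV_two_mul (cSide_pos _ _).le]
      gcongr
      have := hXb s
      simp only [bad, hXc s] at this
      exact this
    have h2 : ∑' s : S, μ (s.1.1 + 1) s.1.2 ≤ ∑' i, v i := by
      simp only [μ]
      rw [ENNReal.tsum_comm]
      refine ENNReal.tsum_le_tsum fun i => ?_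
      refine tsum_ite_le _ _ ?_
      have key : ∀ s t : S, (s.1.1 + 1 ≤ k i ∧ cell Q (s.1.1 + 1) (y i) = s.1.2) →
          (t.1.1 + 1 ≤ k i ∧ cell Q (t.1.1 + 1) (y i) = t.1.2) → t.1.1 ≤ s.1.1 := by
        intro s t hs ht
        by_contra hlt
        push Not at hlt
        refine hXn t (s.1.1 + 1) hlt (bad_congr ?_ (hXb s))
        rw [hXc s, ← hs.2]
        exact cell_le (by lia) (ht.2.trans (hXc t).symm)
      intro s t hs ht
      have e : s.1.1 = t.1.1 := le_antisymm (key t s ht hs) (key s t hs ht)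
      refine Subtype.ext (Prod.ext e ?_)
      rw [← hs.2, ← ht.2, e]
    calc 2 * ∑' s : S, gV δ (dcube Q s.1.1 (X s)).side
        ≤ 2 * ∑' s : S, gV δ 2 * (4 * μ (s.1.1 + 1) s.1.2) := by
          gcongr with s; exact h1 s
      _ = 8 * gV δ 2 * ∑' s : S, μ (s.1.1 + 1) s.1.2 := by
          rw [ENNReal.tsum_mul_left, ENNReal.tsum_mul_left]; ring
      _ ≤ 8 * gV δ 2 * ∑' i, v i := by gcongr
      _ ≤ _ := htot.le

/-! ## John–Nirenberg -/

lemma chebyshev {n : ℕ} {δ : ℝ} (g : (Fin n → ℝ) → ℝ) (E : Set (Fin n → ℝ)) {t : ℝ} :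
    ENNReal.ofReal t * hContent n δ {x | x ∈ E ∧ t < g x} ≤ integH n δ g E := by
  unfold integH
  calc ENNReal.ofReal t * hContent n δ {x | x ∈ E ∧ t < g x}
      = ∫⁻ _ in Ioo (0 : ℝ) t, hContent n δ {x | x ∈ E ∧ t < g x} := by
        rw [setLIntegral_const, Real.volume_Ioo, sub_zero, mul_comm]
    _ ≤ ∫⁻ s in Ioo (0 : ℝ) t, hContent n δ {x | x ∈ E ∧ s < g x} := by
        refine setLIntegral_mono' measurableSet_Ioo fun s hs => hContent_mono ?_
        exact fun x hx => ⟨hx.1, hs.2.trans hx.2⟩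
    _ ≤ _ := lintegral_mono_set fun s hs => hs.1

/-- The decay constant. -/
def kC (n : ℕ) (δ : ℝ) : ℝ := 4 * (cC n δ).toReal + 8

lemma john_nirenberg {n : ℕ} {δ : ℝ} (hδ : 0 < δ) (hδn : δ ≤ n) (f : (Fin n → ℝ) → ℝ)
    {B : ℝ} (hB : 0 < B) (c : Cube n → ℝ)
    (hc : ∀ Q : Cube n, integH n δ (fun x => |f x - c Q|) Q.toSet ≤
      ENNReal.ofReal (2 * B) * gV δ Q.side) (m : ℕ) :
    ∀ Q : Cube n, 2 ^ m * hContent n δ {x | x ∈ Q.toSet ∧ m * (kC n δ * B) < |f x - c Q|} ≤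
      gV δ Q.side := by
  have hC0 : 0 < (cC n δ).toReal := ENNReal.toReal_pos (cC_ne_zero n δ) (cC_ne_top n δ)
  -- weak type estimate
  have weak : ∀ (a : ℝ), 0 < a → ∀ Q : Cube n,
      ENNReal.ofReal a * hContent n δ {x | x ∈ Q.toSet ∧ 2 * a * B < |f x - c Q|} ≤
        gV δ Q.side := by
    intro a ha Q
    have h := (chebyshev (fun x => |f x - c Q|) Q.toSet (t := 2 * a * B)).trans (hc Q)
    rw [show 2 * a * B = (2 * B) * a by ring, ENNReal.ofReal_mul (by positivity),
      mul_assoc] at h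
    rw [show 2 * a * B = (2 * B) * a by ring]
    exact (ENNReal.mul_le_mul_iff_right (ENNReal.ofReal_pos.2 (by positivity)).ne'
      ENNReal.ofReal_ne_top).1 h
  induction m with
  | zero =>
    intro Q
    rw [pow_zero, one_mul, ← hContent_cube hδ hδn]
    exact hContent_mono fun x hx => hx.1
  | succ m ih =>
    intro Q
    set E := {x | x ∈ Q.toSet ∧ 2 * (2 * (cC n δ).toReal) * B < |f x - c Q|} with hEdef
    have hE : cC n δ * hContent n δ E < gV δ Q.side := by
      have h := weak (2 * (cC n δ).toReal) (by positivity) Q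
      rw [ENNReal.ofReal_mul (by norm_num), ENNReal.ofReal_toReal (cC_ne_top n δ),
        mul_assoc] at h
      rw [← hEdef] at h
      by_cases h0 : cC n δ * hContent n δ E = 0
      · rw [h0]; exact gV_pos Q.side_pos
      · have hne : cC n δ * hContent n δ E ≠ ⊤ := by
          intro htop
          rw [htop] at h
          simp at h
          exact gV_ne_top h
        refine lt_of_lt_of_le ?_ h
        have e2 : ENNReal.ofReal 2 = 2 := by simp
        rw [e2, two_mul]
        exact ENNReal.lt_add_right hne h0
    obtain ⟨S, P, hcov, hPQ, hPE, hsum⟩ := stopping_cover hδ Q (fun x hx => hx.1) hE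
    have hdist : ∀ s, |c (P s) - c Q| ≤ kC n δ * B := by
      intro s
      have : ¬ (P s).toSet ⊆ (E ∩ (P s).toSet) ∪ {x | x ∈ (P s).toSet ∧ 2 * 4 * B < |f x - c (P s)|} := by
        intro hsub
        have h1 := (hContent_mono (δ := δ) hsub).trans (hContent_union_le hδ _ _)
        rw [hContent_cube hδ hδn] at h1
        have h2 := weak 4 (by norm_num) (P s)
        have h3 := hPE s
        have e4 : ENNReal.ofReal 4 = 4 := by simp
        rw [e4] at h2
        have h4 : 4 * gV δ (P s).side ≤ 2 * gV δ (P s).side := by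
          calc _ ≤ 4 * (hContent n δ (E ∩ (P s).toSet) + hContent n δ {x | x ∈ (P s).toSet ∧ 2 * 4 * B < |f x - c (P s)|}) := by gcongr
            _ ≤ gV δ (P s).side + gV δ (P s).side := by rw [mul_add]; gcongr
            _ = _ := by ring
        rw [ENNReal.mul_le_mul_iff_left (gV_pos (P s).side_pos).ne' gV_ne_top] at h4
        norm_num at h4
      obtain ⟨x, hx, hnx⟩ := not_subset.1 this
      simp only [mem_union, not_or, mem_inter_iff, mem_ofPred_eq, not_and, not_lt, hEdef] at hnx
      have h1 : |f x - c Q| ≤ 2 * (2 * (cC n δ).toReal) * B := by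
        by_contra hh
        push Not at hh
        exact hnx.1 ⟨hPQ s hx, hh⟩ hx
      have h2 := hnx.2 hx
      calc |c (P s) - c Q| = |(f x - c Q) - (f x - c (P s))| := by congr 1; ring
        _ ≤ |f x - c Q| + |f x - c (P s)| := abs_sub _ _
        _ ≤ 2 * (2 * (cC n δ).toReal) * B + 2 * 4 * B := by gcongr
        _ = _ := by unfold kC; ring
    have hsub : {x | x ∈ Q.toSet ∧ ((m + 1 : ℕ) : ℝ) * (kC n δ * B) < |f x - c Q|} ⊆
        ⋃ s, {x | x ∈ (P s).toSet ∧ m * (kC n δ * B) < |f x - c (P s)|} := by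
      rintro x ⟨hxQ, hx⟩
      push_cast at hx
      have hk : 2 * (2 * (cC n δ).toReal) * B ≤ kC n δ * B := by
        gcongr; unfold kC; linarith
      have hk0 : 0 < kC n δ * B := lt_of_lt_of_le (by positivity) hk
      have hxE : x ∈ E := by
        refine ⟨hxQ, lt_of_le_of_lt hk (lt_of_le_of_lt ?_ hx)⟩
        have : (0 : ℝ) ≤ m * (kC n δ * B) := by positivity
        linarith
      obtain ⟨s, hs⟩ := mem_iUnion.1 (hcov hxE)
      refine mem_iUnion.2 ⟨s, hs, ?_⟩
      have : |f x - c Q| ≤ |f x - c (P s)| + |c (P s) - c Q| := abs_sub_le _ _ _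
      have := hdist s
      linarith
    calc 2 ^ (m + 1) * hContent n δ {x | x ∈ Q.toSet ∧ ((m + 1 : ℕ) : ℝ) * (kC n δ * B) < |f x - c Q|}
        ≤ 2 ^ (m + 1) * ∑' s, hContent n δ {x | x ∈ (P s).toSet ∧ m * (kC n δ * B) < |f x - c (P s)|} := by
          gcongr
          exact (hContent_mono hsub).trans (hContent_iUnion_le hδ _)
      _ = 2 * ∑' s, 2 ^ m * hContent n δ {x | x ∈ (P s).toSet ∧ m * (kC n δ * B) < |f x - c (P s)|} := by
          rw [ENNReal.tsum_mul_left]; ring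
      _ ≤ 2 * ∑' s, gV δ (P s).side := by
          gcongr with s
          exact ih (P s)
      _ ≤ _ := hsum

lemma kC_pos (n : ℕ) (δ : ℝ) : 0 < kC n δ := by
  have : 0 ≤ (cC n δ).toReal := ENNReal.toReal_nonneg
  unfold kC; linarith

lemma exp_integral_le {n : ℕ} {δ : ℝ} (hδ : 0 < δ) (hδn : δ ≤ n) (f : (Fin n → ℝ) → ℝ)
    {B : ℝ} (hB : 0 < B) (c : Cube n → ℝ)
    (hc : ∀ Q : Cube n, integH n δ (fun x => |f x - c Q|) Q.toSet ≤
      ENNReal.ofReal (2 * B) * gV δ Q.side) (Q : Cube n) {β : ℝ}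
    (hβ : |β| * (kC n δ * B) ≤ Real.log 2 / 2) :
    integH n δ (fun x => Real.exp (β * f x)) Q.toSet ≤
      ENNReal.ofReal (3 * Real.exp (β * c Q)) * gV δ Q.side := by
  set T := Real.exp (β * c Q) with hT
  have hT0 : 0 < T := Real.exp_pos _
  have hK : 0 < kC n δ * B := mul_pos (kC_pos n δ) hB
  have hl2 : 0 < Real.log 2 := Real.log_pos (by norm_num)
  have tail : ∀ t ∈ Ioi T, hContent n δ {x | x ∈ Q.toSet ∧ t < Real.exp (β * f x)} ≤
      ENNReal.ofReal (2 * T ^ 2 * t ^ (-2 : ℝ)) * gV δ Q.side := by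
    intro t ht
    have htT : T < t := ht
    have ht0 : 0 < t := hT0.trans htT
    set L := Real.log (t / T) with hL
    have hL0 : 0 < L := Real.log_pos ((one_lt_div hT0).2 htT)
    set m := ⌊2 * L / Real.log 2⌋₊ with hm
    have hm1 : (m : ℝ) * Real.log 2 ≤ 2 * L := by
      rw [← le_div_iff₀ hl2]; exact Nat.floor_le (by positivity)
    have hm2 : 2 * L < (m + 1) * Real.log 2 := by
      rw [← div_lt_iff₀ hl2]; exact Nat.lt_floor_add_one _
    have hsub : {x | x ∈ Q.toSet ∧ t < Real.exp (β * f x)} ⊆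
        {x | x ∈ Q.toSet ∧ m * (kC n δ * B) < |f x - c Q|} := by
      rintro x ⟨hxQ, hx⟩
      refine ⟨hxQ, ?_⟩
      have h1 : L < β * (f x - c Q) := by
        rw [hL, Real.log_lt_iff_lt_exp (by positivity), div_lt_iff₀ hT0, hT, ← Real.exp_add,
          show β * (f x - c Q) + β * c Q = β * f x by ring]
        exact hx
      have h2 : β * (f x - c Q) ≤ |β| * |f x - c Q| := by
        rw [← abs_mul]; exact le_abs_self _
      have h3 : L * (kC n δ * B) < Real.log 2 / 2 * |f x - c Q| := by
        calc L * (kC n δ * B) < |β| * |f x - c Q| * (kC n δ * B) := by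
              gcongr; linarith
          _ = |β| * (kC n δ * B) * |f x - c Q| := by ring
          _ ≤ _ := by gcongr
      have h4 : m * Real.log 2 * (kC n δ * B) ≤ 2 * L * (kC n δ * B) := by gcongr
      have h5 : Real.log 2 * (m * (kC n δ * B)) < Real.log 2 * |f x - c Q| := by linarith
      exact lt_of_mul_lt_mul_left h5 hl2.le
    have hJN := (mul_le_mul_right (hContent_mono (δ := δ) hsub) (2 ^ m)).trans
      (john_nirenberg hδ hδn f hB c hc m Q)
    have hpow : 1 ≤ 2 * T ^ 2 * t ^ (-2 : ℝ) * 2 ^ m := by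
      have h1 : (t / T) ^ 2 ≤ 2 ^ (m + 1) := by
        rw [← Real.log_le_log_iff (by positivity) (by positivity), Real.log_pow, Real.log_pow]
        push_cast
        linarith
      rw [div_pow, div_le_iff₀ (by positivity), pow_succ] at h1
      rw [Real.rpow_neg ht0.le, show (2 : ℝ) = ((2 : ℕ) : ℝ) by norm_num, Real.rpow_natCast]
      push_cast
      rw [show 2 * T ^ 2 * (t ^ 2)⁻¹ * 2 ^ m = (2 ^ m * 2 * T ^ 2) / t ^ 2 by field_simp]
      rw [one_le_div (by positivity)]
      exact h1
    set H := hContent n δ {x | x ∈ Q.toSet ∧ t < Real.exp (β * f x)}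
    calc H ≤ ENNReal.ofReal (2 * T ^ 2 * t ^ (-2 : ℝ) * 2 ^ m) * H :=
          le_mul_of_one_le_left zero_le (ENNReal.one_le_ofReal.2 hpow)
      _ = ENNReal.ofReal (2 * T ^ 2 * t ^ (-2 : ℝ)) * (2 ^ m * H) := by
          rw [ENNReal.ofReal_mul (by positivity), ENNReal.ofReal_pow (by norm_num), mul_assoc]
          simp
      _ ≤ _ := by gcongr
  have hint : ∫⁻ t in Ioi T, ENNReal.ofReal (2 * T ^ 2 * t ^ (-2 : ℝ)) =
      ENNReal.ofReal (2 * T) := by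
    rw [← ofReal_integral_eq_lintegral_ofReal]
    · rw [integral_const_mul, integral_Ioi_rpow_of_lt (by norm_num) hT0]
      congr 1
      norm_num
      rw [Real.rpow_neg_one]
      field_simp
    · exact (integrableOn_Ioi_rpow_of_lt (by norm_num) hT0).const_mul _
    · refine (ae_restrict_iff' measurableSet_Ioi).2 (Filter.Eventually.of_forall fun t ht => ?_)
      have : 0 < t := hT0.trans ht
      simp only [Pi.zero_apply]
      positivity
  unfold integH
  calc ∫⁻ t in Ioi (0 : ℝ), hContent n δ {x | x ∈ Q.toSet ∧ t < Real.exp (β * f x)}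
      = ∫⁻ t in Ioc 0 T ∪ Ioi T, hContent n δ {x | x ∈ Q.toSet ∧ t < Real.exp (β * f x)} := by
        rw [Ioc_union_Ioi_eq_Ioi hT0.le]
    _ ≤ (∫⁻ t in Ioc 0 T, hContent n δ {x | x ∈ Q.toSet ∧ t < Real.exp (β * f x)}) +
        ∫⁻ t in Ioi T, hContent n δ {x | x ∈ Q.toSet ∧ t < Real.exp (β * f x)} :=
        lintegral_union_le _ _ _
    _ ≤ (∫⁻ _ in Ioc 0 T, gV δ Q.side) +
        ∫⁻ t in Ioi T, ENNReal.ofReal (2 * T ^ 2 * t ^ (-2 : ℝ)) * gV δ Q.side := by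
        refine add_le_add ?_ (setLIntegral_mono' measurableSet_Ioi tail)
        refine lintegral_mono fun t => ?_
        rw [← hContent_cube hδ hδn]
        exact hContent_mono fun x hx => hx.1
    _ = gV δ Q.side * ENNReal.ofReal T + ENNReal.ofReal (2 * T) * gV δ Q.side := by
        rw [setLIntegral_const, Real.volume_Ioc, sub_zero, lintegral_mul_const' _ _ gV_ne_top, hint]
    _ = _ := by
        rw [mul_comm, ← add_mul, ← ENNReal.ofReal_add hT0.le (by positivity)]
        congr 2; ring

lemma compact_subset_cube {n : ℕ} {K : Set (Fin n → ℝ)} (hK : IsCompact K) :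
    ∃ Q : Cube n, K ⊆ Q.toSet := by
  obtain ⟨r, hr⟩ := hK.isBounded.subset_closedBall 0
  refine ⟨⟨fun _ => -(|r| + 1), 2 * (|r| + 1) + 1, by positivity⟩, fun x hx i => ?_⟩
  have h1 : ‖x‖ ≤ r := by simpa using hr hx
  have h2 : |x i| ≤ ‖x‖ := norm_le_pi_norm x i
  have h3 := le_abs_self r
  have h4 := abs_le.1 (h2.trans (h1.trans h3))
  constructor <;> dsimp only <;> linarith [h4.1, h4.2]

/-- exponentials of (normalized) BMO functions are A_{p,δ} weights. -/
theorem stmt1 (n : ℕ) (hn : 1 ≤ n) (δ p : ℝ) (hδ0 : 0 < δ) (hδn : δ ≤ n) (hp : 1 < p) :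
    ∃ c : ℝ, 0 < c ∧ ∀ f : (Fin n → ℝ) → ℝ, MemBMO n δ f → bmoNorm n δ f ≠ 0 →
      MemAp n δ p (fun x => Real.exp (c * f x / (bmoNorm n δ f).toReal)) := by
  have hp1 : 0 < p - 1 := by linarith
  have hk := kC_pos n δ
  have hl2 : 0 < Real.log 2 := Real.log_pos (by norm_num)
  set γ : ℝ := Real.log 2 / (2 * kC n δ) * min 1 (p - 1) with hγ
  have hmin : 0 < min 1 (p - 1) := lt_min one_pos hp1
  have hγ0 : 0 < γ := by positivity
  refine ⟨γ, hγ0, fun f hf hne => ?_⟩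
  obtain ⟨⟨hqc, -⟩, hfin⟩ := hf
  set B := (bmoNorm n δ f).toReal with hBdef
  have hB : 0 < B := ENNReal.toReal_pos hne hfin.ne
  have hex : ∀ Q : Cube n, ∃ c : ℝ, integH n δ (fun x => |f x - c|) Q.toSet ≤
      ENNReal.ofReal (2 * B) * gV δ Q.side := by
    intro Q
    have h1 : (⨅ c : ℝ, integH n δ (fun x => |f x - c|) Q.toSet / hContent n δ Q.toSet) <
        ENNReal.ofReal (2 * B) := by
      refine lt_of_le_of_lt (le_iSup (fun Q : Cube n => ⨅ c : ℝ,
        integH n δ (fun x => |f x - c|) Q.toSet / hContent n δ Q.toSet) Q) ?_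
      change bmoNorm n δ f < _
      rw [← ENNReal.ofReal_toReal hfin.ne, ← hBdef]
      exact (ENNReal.ofReal_lt_ofReal_iff (by positivity)).2 (by linarith)
    obtain ⟨c, hc⟩ := iInf_lt_iff.1 h1
    refine ⟨c, ?_⟩
    rw [hContent_cube hδ0 hδn] at hc
    exact (ENNReal.div_le_iff (gV_pos Q.side_pos).ne' gV_ne_top).1 hc.le
  choose c hc using hex
  have hβ1 : |γ / B| * (kC n δ * B) ≤ Real.log 2 / 2 := by
    rw [abs_of_pos (by positivity)]
    calc γ / B * (kC n δ * B) = Real.log 2 / 2 * min 1 (p - 1) := by rw [hγ]; field_simp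
      _ ≤ Real.log 2 / 2 * 1 := by gcongr; exact min_le_left _ _
      _ = _ := mul_one _
  have hβ2 : |-(γ / B / (p - 1))| * (kC n δ * B) ≤ Real.log 2 / 2 := by
    rw [abs_neg, abs_of_pos (by positivity)]
    calc γ / B / (p - 1) * (kC n δ * B) = Real.log 2 / 2 * (min 1 (p - 1) / (p - 1)) := by
          rw [hγ]; field_simp
      _ ≤ Real.log 2 / 2 * 1 := by
          gcongr; rw [div_le_one hp1]; exact min_le_right _ _
      _ = _ := mul_one _
  have hw : (fun x => Real.exp (γ * f x / B)) = fun x => Real.exp (γ / B * f x) := by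
    ext x; congr 1; ring
  rw [hw]
  have hw2 : (fun x => Real.exp (γ / B * f x) ^ (-(1 / (p - 1)))) =
      fun x => Real.exp (-(γ / B / (p - 1)) * f x) := by
    ext x; rw [← Real.exp_mul]; congr 1; ring
  have I1 := fun Q => exp_integral_le hδ0 hδn f hB c hc Q hβ1
  have I2 := fun Q => exp_integral_le hδ0 hδn f hB c hc Q hβ2
  refine ⟨⟨⟨?_, ?_⟩, ?_⟩, ?_⟩
  · intro ε hε
    obtain ⟨O, h1, h2, h3⟩ := hqc ε hε
    exact ⟨O, h1, h2, Real.continuous_exp.comp_continuousOn (continuousOn_const.mul h3)⟩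
  · intro K hK
    obtain ⟨Q, hQ⟩ := compact_subset_cube hK
    refine lt_of_le_of_lt ?_ (lt_of_le_of_lt (I1 Q)
      (ENNReal.mul_lt_top ENNReal.ofReal_lt_top gV_ne_top.lt_top))
    simp only [Real.abs_exp]
    exact lintegral_mono fun t => hContent_mono fun x hx => ⟨hQ hx.1, hx.2⟩
  · unfold AEContent
    simp only [Real.exp_pos, not_true_eq_false]
    exact hContent_empty n hδ0
  · refine lt_of_le_of_lt (b := ENNReal.ofReal (3 * 3 ^ (p - 1))) ?_ ENNReal.ofReal_lt_top
    refine iSup_le fun Q => ?_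
    rw [hw2, hContent_cube hδ0 hδn]
    have hg0 := (gV_pos (δ := δ) Q.side_pos).ne'
    calc _ ≤ ENNReal.ofReal (3 * Real.exp (γ / B * c Q)) *
          ENNReal.ofReal (3 * Real.exp (-(γ / B / (p - 1)) * c Q)) ^ (p - 1) := by
          gcongr
          · exact (ENNReal.div_le_iff hg0 gV_ne_top).2 (I1 Q)
          · exact (ENNReal.div_le_iff hg0 gV_ne_top).2 (I2 Q)
      _ = _ := by
          rw [ENNReal.ofReal_rpow_of_pos (by positivity), ← ENNReal.ofReal_mul (by positivity),
            Real.mul_rpow (by norm_num) (Real.exp_pos _).le, ← Real.exp_mul]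
          congr 1
          have : Real.exp (γ / B * c Q) * Real.exp (-(γ / B / (p - 1)) * c Q * (p - 1)) = 1 := by
            rw [← Real.exp_add, Real.exp_eq_one_iff]; field_simp; ring
          linear_combination (3 * 3 ^ (p - 1) : ℝ) * this
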